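/- arXiv:1911.04964 — 2 statements merged into one kernel-verified Lean document; each statement's English description precedes it below -/
import Mathlib

section
/- Conservation of Bias Over Distributions: Let B be a finite set of information resources with |B| = m, let τ_k = { t ⊆ Ω : |t| = k }, and let P = { D ∈ ℝ^m : D(f) ≥ 0 for all f ∈ B, ∑_{f∈B} D(f) = 1 } be the standard simplex of distributions over B, equipped with the (m−1)-dimensional Lebesgue measure on the affine hyperplane containing P. Then ∑_{t ∈ τ_k} ∫_P bias(D, t) dD = 0. -/
open MeasureTheory

/-!
For a fixed distribution the biases already cancel: a point of an `n`-element set lies in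
`(n - 1).choose (k - 1) = n.choose k * (k / n)` of its `k`-subsets, so a function of total mass `1`
has average sum `k / n` over the `k`-subsets. The finite sum over `t` may be moved inside the
integral because the simplex is a bounded subset of a hyperplane of dimension `m - 1`, on which
`(m - 1)`-dimensional Hausdorff measure is a translate of a Haar measure.
-/

section PowersetCard

open Finset

lemma card_powersetCard_succ_filter_mem {α : Type*} [DecidableEq α] {s : Finset α} {a : α}
    (ha : a ∈ s) (k : ℕ) : #{t ∈ s.powersetCard (k + 1) | a ∈ t} = (#s - 1).choose k := by
  simpa using card_filter_powersetCard_subset {a} s (k + 1) (by simpa using ha) (by simp)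

lemma sum_powersetCard_succ_sum {α M : Type*} [AddCommMonoid M] (s : Finset α) (k : ℕ)
    (a : α → M) :
    ∑ t ∈ s.powersetCard (k + 1), ∑ i ∈ t, a i = (#s - 1).choose k • ∑ i ∈ s, a i := by
  classical
  calc ∑ t ∈ s.powersetCard (k + 1), ∑ i ∈ t, a i
      = ∑ i ∈ s, ∑ t ∈ s.powersetCard (k + 1) with i ∈ t, a i :=
        sum_comm' fun t i => by
          simp only [mem_filter, mem_powersetCard]
          exact ⟨fun h => ⟨⟨h.1, h.2⟩, h.1.1 h.2⟩, fun h => h.1⟩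
    _ = ∑ i ∈ s, (#s - 1).choose k • a i :=
        sum_congr rfl fun i hi => by rw [sum_const, card_powersetCard_succ_filter_mem hi]
    _ = (#s - 1).choose k • ∑ i ∈ s, a i := sum_nsmul ..

lemma sum_powersetCard_sum {α K : Type*} [Semifield K] [CharZero K] (s : Finset α) (k : ℕ)
    (a : α → K) :
    ∑ t ∈ s.powersetCard k, ∑ i ∈ t, a i = (#s).choose k * (k / #s) * ∑ i ∈ s, a i := by
  rcases k with _ | k
  · simp
  rw [sum_powersetCard_succ_sum]
  rcases s.eq_empty_or_nonempty with rfl | hs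
  · simp
  have hs0 : (#s : K) ≠ 0 := Nat.cast_ne_zero.2 hs.card_ne_zero
  have hchoose : (#s : K) * (#s - 1).choose k = (#s).choose (k + 1) * (k + 1 : ℕ) := by
    have h := Nat.add_one_mul_choose_eq (#s - 1) k
    rw [Nat.sub_add_cancel hs.card_pos] at h
    exact_mod_cast h
  rw [nsmul_eq_mul, ← mul_div_assoc, ← hchoose, mul_div_cancel_left₀ _ hs0]

lemma sum_powersetCard_bias_eq_zero {Ω B K : Type*} [Fintype Ω] [Fintype B] [Field K] [CharZero K]
    {D : B → K} (hD : ∑ f, D f = 1) {Pbar : B → Ω → K} (hP : ∀ f, ∑ ω, Pbar f ω = 1)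
    (k : ℕ) :
    ∑ t ∈ powersetCard k (univ : Finset Ω),
      ((∑ f, D f * ∑ ω ∈ t, Pbar f ω) - (k : K) / Fintype.card Ω) = 0 := by
  rw [sum_sub_distrib, sum_comm]
  simp only [← mul_sum, sum_powersetCard_sum, hP, mul_one, ← sum_mul, hD, one_mul, sum_const,
    card_powersetCard, card_univ, nsmul_eq_mul, sub_self]

end PowersetCard

section Hausdorff

lemma hausdorffMeasure_lt_top_of_isBounded_of_subset_affineSubspace {V P : Type*}
    [NormedAddCommGroup V] [NormedSpace ℝ V] [MetricSpace P] [NormedAddTorsor V P]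
    [MeasurableSpace P] [BorelSpace P] {s : Set P} (hs : Bornology.IsBounded s)
    {A : AffineSubspace ℝ P} [FiniteDimensional ℝ A.direction] (hsA : s ⊆ A) :
    μH[Module.finrank ℝ A.direction] s < ⊤ := by
  rcases s.eq_empty_or_nonempty with rfl | ⟨p, hp⟩
  · simp
  borelize ↥A.direction
  let translate : A.direction → P := fun v => (v : V) +ᵥ p
  have hiso : Isometry translate :=
    (IsometryEquiv.vaddConst p).isometry.comp isometry_subtype_coe
  have himage : translate '' (translate ⁻¹' s) = s := by
    refine Set.image_preimage_eq_of_subset fun q hq => ?_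
    exact ⟨⟨q -ᵥ p, A.vsub_mem_direction (hsA hq) (hsA hp)⟩, vsub_vadd q p⟩
  rw [← himage, hiso.hausdorffMeasure_image (.inl (Nat.cast_nonneg _))]
  exact (hiso.antilipschitz.isBounded_preimage hs).measure_lt_top

lemma hausdorffMeasure_lt_top_of_isBounded_of_subset_hyperplane {E : Type*}
    [NormedAddCommGroup E] [NormedSpace ℝ E] [FiniteDimensional ℝ E] [MeasurableSpace E]
    [BorelSpace E] {s : Set E} (hs : Bornology.IsBounded s) {φ : Module.Dual ℝ E} (hφ : φ ≠ 0)
    {c : ℝ} (hsφ : ∀ x ∈ s, φ x = c) :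
    μH[(Module.finrank ℝ E : ℝ) - 1] s < ⊤ := by
  rcases s.eq_empty_or_nonempty with rfl | ⟨p, hp⟩
  · simp
  have hsA : s ⊆ AffineSubspace.mk' p φ.ker := fun x hx => by
    simp [AffineSubspace.mem_mk', hsφ x hx, hsφ p hp]
  have hdim : (Module.finrank ℝ E : ℝ) - 1
      = Module.finrank ℝ (AffineSubspace.mk' p φ.ker).direction := by
    rw [AffineSubspace.direction_mk', ← Module.Dual.finrank_ker_add_one_of_ne_zero hφ]
    push_cast
    ring
  rw [hdim]
  exact hausdorffMeasure_lt_top_of_isBounded_of_subset_affineSubspace hs hsA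

end Hausdorff

section Simplex

variable {B : Type*} [Fintype B]

lemma isCompact_ofLp_preimage_stdSimplex :
    IsCompact (WithLp.ofLp ⁻¹' stdSimplex ℝ B : Set (EuclideanSpace ℝ B)) :=
  (PiLp.homeomorph 2 fun _ : B => ℝ).isCompact_preimage.2 (isCompact_stdSimplex ℝ B)

lemma hausdorffMeasure_ofLp_preimage_stdSimplex_lt_top :
    μH[(Fintype.card B : ℝ) - 1]
      (WithLp.ofLp ⁻¹' stdSimplex ℝ B : Set (EuclideanSpace ℝ B)) < ⊤ := by
  classical
  rcases isEmpty_or_nonempty B with _ | ⟨⟨f₀⟩⟩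
  · simp [stdSimplex]
  let coordSum : Module.Dual ℝ (EuclideanSpace ℝ B) := ∑ f, (EuclideanSpace.proj f).toLinearMap
  have hne : coordSum ≠ 0 := fun h => by
    simpa [coordSum] using LinearMap.congr_fun h (EuclideanSpace.single f₀ 1)
  rw [← finrank_euclideanSpace (𝕜 := ℝ)]
  exact hausdorffMeasure_lt_top_of_isBounded_of_subset_hyperplane
    isCompact_ofLp_preimage_stdSimplex.isBounded hne (c := 1) fun D hD => by
      simpa [coordSum] using hD.2

lemma integrableOn_ofLp_preimage_stdSimplex {F : Type*} [NormedAddCommGroup F]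
    {g : EuclideanSpace ℝ B → F} (hg : ContinuousOn g (WithLp.ofLp ⁻¹' stdSimplex ℝ B)) :
    IntegrableOn g (WithLp.ofLp ⁻¹' stdSimplex ℝ B) μH[(Fintype.card B : ℝ) - 1] :=
  hg.integrableOn_of_subset_isCompact isCompact_ofLp_preimage_stdSimplex
    isCompact_ofLp_preimage_stdSimplex.measurableSet subset_rfl
    hausdorffMeasure_ofLp_preimage_stdSimplex_lt_top.ne

end Simplex

theorem conservation_of_bias_over_distributions_general {Ω B α : Type*} [Fintype Ω] [Fintype B]
    [MeasurableSpace α] {μ : Measure α} {D : α → B → ℝ}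
    (hDint : ∀ f, Integrable (fun x => D x f) μ) (hD : ∀ᵐ x ∂μ, ∑ f, D x f = 1)
    {Pbar : B → Ω → ℝ} (hP : ∀ f, ∑ ω, Pbar f ω = 1) (k : ℕ) :
    ∑ t ∈ Finset.powersetCard k (Finset.univ : Finset Ω),
      ∫ x, ((∑ f, D x f * ∑ ω ∈ t, Pbar f ω) - (k : ℝ) / Fintype.card Ω) ∂μ = 0 := by
  have hone : Integrable (fun _ => (1 : ℝ)) μ :=
    (integrable_finsetSum _ fun f _ => hDint f).congr hD
  have hconst : Integrable (fun _ => (k : ℝ) / Fintype.card Ω) μ := by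
    simpa only [mul_one] using hone.const_mul ((k : ℝ) / Fintype.card Ω)
  rw [← integral_finsetSum]
  · exact integral_eq_zero_of_ae (hD.mono fun x hx => sum_powersetCard_bias_eq_zero hx hP k)
  · exact fun t _ => (integrable_finsetSum _ fun f _ => (hDint f).mul_const _).sub hconst

/-- **Conservation of Bias Over Distributions.**
Summing over all size-`k` target sets `t` the integral of `bias(D,t)` over the
standard simplex `P` of distributions over `B` (with respect to the
`(m-1)`-dimensional Hausdorff (Lebesgue) measure on the affine hyperplane
containing `P`) yields zero. -/
theorem conservation_of_bias_over_distributions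
    {Ω B : Type*} [Fintype Ω] [Fintype B]
    (m : ℕ) (hm : Fintype.card B = m)
    (Pbar : B → Ω → ℝ)
    (hP0 : ∀ f ω, 0 ≤ Pbar f ω)
    (hP1 : ∀ f, ∑ ω, Pbar f ω = 1)
    (k : ℕ) (hk1 : 1 ≤ k) (hk2 : k ≤ Fintype.card Ω)
    (Pset : Set (EuclideanSpace ℝ B))
    (hPset : Pset = {D | (∀ f, 0 ≤ D f) ∧ ∑ f, D f = 1}) :
    ∑ t ∈ Finset.powersetCard k (Finset.univ : Finset Ω),
      ∫ D in Pset,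
        ((∑ f, D f * ∑ ω ∈ t, Pbar f ω) - (k : ℝ) / (Fintype.card Ω))
          ∂(μH[(m : ℝ) - 1]) = 0 := by
  subst hm hPset
  exact conservation_of_bias_over_distributions_general
    (fun f => integrableOn_ofLp_preimage_stdSimplex (by fun_prop))
    (ae_restrict_of_forall_mem isCompact_ofLp_preimage_stdSimplex.measurableSet fun _ hD => hD.2)
    hP1 k
end

section
/- Expected-expressivity bound on bias: Let D be a probability distribution over a set of information resources and let t ⊆ Ω be a fixed target set with |t| = k and p = k/|Ω|. Then bias(D, t) ≤ √((1/2)(log₂|Ω| − E_{F∼D}[H(P̄_F)])) = √(E_{F∼D}[(1/2)·D_KL(P̄_F ∥ U)]), where U is the uniform distribution on Ω. In particular, E_{F∼D}[H(P̄_F)] ≤ H(E_{F∼D}[P̄_F]) ≤ log₂|Ω| − 2·bias(D, t)². -/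
/-!
The Donsker–Varadhan inequality `s μ[X] - log ν[exp (s X)] ≤ KL(μ ‖ ν)`, applied to an `X` that is
sub-Gaussian with parameter `c` under `ν`, says that a quadratic polynomial in `s` is nonnegative;
its discriminant gives `μ[X]² ≤ 2 c KL(μ ‖ ν)`. By Hoeffding's lemma a centred indicator has
`c = 1/4`, which is Pinsker's inequality for a single event. For `ν` uniform on `Ω` the divergence
is `log |Ω| - H(μ)` in nats, and passing to base `2` divides it by `log 2 < 1`, which only helps.

Taking for `μ` the averaged distribution `E[P̄_F]` yields the upper bound on its entropy. Jensen's
inequality for the concave function `H` gives `E[H(P̄_F)] ≤ H(E[P̄_F])`, and the bound on the bias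
follows by combining the two.
-/

open MeasureTheory

open InformationTheory ProbabilityTheory

section KullbackLeibler

variable {α : Type*} [MeasurableSpace α] {μ ν : Measure α} [IsProbabilityMeasure μ]
  [IsProbabilityMeasure ν]

/-- The easy half of the **Donsker–Varadhan variational formula**. -/
lemma integral_sub_log_integral_exp_le_toReal_klDiv {g : α → ℝ} (hgμ : Integrable g μ)
    (hgν : Integrable (fun x => Real.exp (g x)) ν) (hKL : klDiv μ ν ≠ ⊤) :
    ∫ x, g x ∂μ - Real.log (∫ x, Real.exp (g x) ∂ν) ≤ (klDiv μ ν).toReal := by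
  obtain ⟨hac, hllr⟩ := klDiv_ne_top_iff.1 hKL
  have : IsProbabilityMeasure (ν.tilted g) := isProbabilityMeasure_tilted hgν
  have hgibbs : 0 ≤ ∫ x, llr μ (ν.tilted g) x ∂μ := by
    simpa using integral_llr_add_sub_measure_univ_nonneg
      (hac.trans (absolutelyContinuous_tilted hgν)) (integrable_llr_tilted_right hac hgμ hllr hgν)
  rw [integral_llr_tilted_right hac hgμ hgν hllr] at hgibbs
  rw [toReal_klDiv_of_measure_eq hac (by simp)]
  linarith

lemma sq_integral_le_toReal_klDiv_of_hasSubgaussianMGF {X : α → ℝ} {c : NNReal}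
    (hX : HasSubgaussianMGF X c ν) (hXμ : Integrable X μ) (hKL : klDiv μ ν ≠ ⊤) :
    (∫ x, X x ∂μ) ^ 2 ≤ 2 * c * (klDiv μ ν).toReal := by
  have hquad (s : ℝ) : 0 ≤ c / 2 * (s * s) + -(∫ x, X x ∂μ) * s + (klDiv μ ν).toReal := by
    have hDV := integral_sub_log_integral_exp_le_toReal_klDiv (hXμ.const_mul s)
      (hX.integrable_exp_mul s) hKL
    have hcgf : Real.log (∫ x, Real.exp (s * X x) ∂ν) ≤ c * s ^ 2 / 2 := hX.cgf_le s
    rw [integral_const_mul] at hDV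
    linarith
  have hdiscrim := discrim_le_zero hquad
  rw [discrim] at hdiscrim
  linarith

/-- **Pinsker's inequality** for a bounded test function. -/
lemma two_mul_sq_integral_sub_integral_le_toReal_klDiv {X : α → ℝ} {a b : ℝ}
    (hX : AEMeasurable X ν) (hab : ∀ᵐ x ∂ν, X x ∈ Set.Icc a b) (hKL : klDiv μ ν ≠ ⊤) :
    2 * (∫ x, X x ∂μ - ∫ x, X x ∂ν) ^ 2 ≤ (b - a) ^ 2 * (klDiv μ ν).toReal := by
  have hac : μ ≪ ν := (klDiv_ne_top_iff.1 hKL).1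
  have hXμ : Integrable X μ := .of_mem_Icc a b (hX.mono_ac hac) (hac.ae_le hab)
  have hparam : (((‖b - a‖₊ / 2) ^ 2 : NNReal) : ℝ) = (b - a) ^ 2 / 4 := by
    simp only [NNReal.coe_pow, NNReal.coe_div, coe_nnnorm, div_pow, Real.norm_eq_abs, sq_abs]
    norm_num
  have hsq := sq_integral_le_toReal_klDiv_of_hasSubgaussianMGF (hasSubgaussianMGF_of_mem_Icc hX hab)
    (hXμ.sub (integrable_const _)) hKL
  rw [integral_sub hXμ (integrable_const _), integral_const, probReal_univ, one_smul,
    hparam] at hsq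
  linarith

lemma two_mul_sq_measureReal_sub_le_toReal_klDiv {s : Set α} (hs : MeasurableSet s)
    (hKL : klDiv μ ν ≠ ⊤) : 2 * (μ.real s - ν.real s) ^ 2 ≤ (klDiv μ ν).toReal := by
  have hmem (x : α) : s.indicator (1 : α → ℝ) x ∈ Set.Icc (0 : ℝ) 1 :=
    ⟨Set.indicator_nonneg (by simp) x, Set.indicator_le_self' (by simp) x⟩
  simpa [integral_indicator_one hs] using two_mul_sq_integral_sub_integral_le_toReal_klDiv
    (measurable_one.indicator hs).aemeasurable (.of_forall hmem) hKL

end KullbackLeibler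

section Entropy

variable {Ω : Type*} [Fintype Ω]

/-- The Shannon entropy of the weights `P`, measured in nats; `H(P)` in the statement of the bound
on the bias is `shannonEntropy P / Real.log 2`. -/
noncomputable def shannonEntropy (P : Ω → ℝ) : ℝ :=
  ∑ ω, Real.negMulLog (P ω)

lemma neg_sum_mul_logb (b : ℝ) (P : Ω → ℝ) :
    -∑ ω, P ω * Real.logb b (P ω) = shannonEntropy P / Real.log b := by
  simp only [shannonEntropy, Real.negMulLog, Real.logb, Finset.sum_div, ← Finset.sum_neg_distrib,
    neg_mul, neg_div, mul_div_assoc]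

lemma continuous_shannonEntropy : Continuous (shannonEntropy (Ω := Ω)) :=
  continuous_finsetSum _ fun ω _ => Real.continuous_negMulLog.comp (continuous_apply ω)

lemma concaveOn_shannonEntropy : ConcaveOn ℝ (Set.Ici (0 : Ω → ℝ)) shannonEntropy := by
  refine ⟨convex_Ici 0, fun P hP Q hQ a b ha hb hab => ?_⟩
  simp only [shannonEntropy, Finset.smul_sum, ← Finset.sum_add_distrib]
  exact Finset.sum_le_sum fun ω _ => Real.concaveOn_negMulLog.2 (hP ω) (hQ ω) ha hb hab

lemma integral_shannonEntropy_le {F : Type*} [MeasurableSpace F] {D : Measure F}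
    [IsProbabilityMeasure D] {P : F → Ω → ℝ} (hP0 : ∀ᵐ f ∂D, 0 ≤ P f) (hP : Integrable P D)
    (hH : Integrable (fun f => shannonEntropy (P f)) D) :
    ∫ f, shannonEntropy (P f) ∂D ≤ shannonEntropy (∫ f, P f ∂D) :=
  concaveOn_shannonEntropy.le_map_integral continuous_shannonEntropy.continuousOn isClosed_Ici
    hP0 hP hH

end Entropy

section Uniform

variable {Ω : Type*} [MeasurableSpace Ω] [MeasurableSingletonClass Ω]

lemma absolutelyContinuous_uniformOn_univ [Finite Ω] (μ : Measure Ω) :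
    μ ≪ uniformOn Set.univ := by
  intro s hs
  rw [uniformOn_eq_zero_iff Set.finite_univ, Set.univ_inter] at hs
  rw [hs, measure_empty]

variable [Fintype Ω]

lemma measureReal_uniformOn_univ (s : Finset Ω) :
    (uniformOn (Set.univ : Set Ω)).real s = (s.card : ℝ) / Fintype.card Ω := by
  simp [measureReal_def, uniformOn_univ]

lemma toReal_klDiv_eq_sum {μ ν : Measure Ω} [IsProbabilityMeasure μ] [IsProbabilityMeasure ν]
    (hac : μ ≪ ν) :
    (klDiv μ ν).toReal = ∑ ω, μ.real {ω} * Real.log (μ.real {ω} / ν.real {ω}) := by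
  rw [toReal_klDiv_of_measure_eq hac (by simp), integral_fintype .of_finite]
  refine Finset.sum_congr rfl fun ω _ => ?_
  have hdensity : (μ.rnDeriv ν ω).toReal * ν.real {ω} = μ.real {ω} := by
    conv_rhs => rw [← Measure.withDensity_rnDeriv_eq μ ν hac]
    simp [measureReal_def, mul_comm]
  by_cases hν : ν.real {ω} = 0
  · rw [← hdensity, hν, mul_zero, zero_smul, zero_mul]
  · rw [llr, ← hdensity, mul_div_cancel_right₀ _ hν, smul_eq_mul]

lemma toReal_klDiv_uniformOn_univ (μ : Measure Ω) [IsProbabilityMeasure μ] :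
    (klDiv μ (uniformOn Set.univ)).toReal =
      Real.log (Fintype.card Ω) - shannonEntropy fun ω => μ.real {ω} := by
  have : Nonempty Ω := nonempty_of_isProbabilityMeasure μ
  have : IsProbabilityMeasure (uniformOn (Set.univ : Set Ω)) :=
    isProbabilityMeasure_uniformOn Set.finite_univ Set.univ_nonempty
  have hterm (ω : Ω) : μ.real {ω} * Real.log (μ.real {ω} / (uniformOn Set.univ).real {ω}) =
      μ.real {ω} * Real.log (Fintype.card Ω) - Real.negMulLog (μ.real {ω}) := by
    have huniform : (uniformOn Set.univ).real {ω} = (Fintype.card Ω : ℝ)⁻¹ := by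
      simpa using measureReal_uniformOn_univ {ω}
    rw [huniform, div_inv_eq_mul]
    rcases eq_or_ne (μ.real {ω}) 0 with hω | hω
    · simp [hω]
    · rw [Real.log_mul hω (by positivity), Real.negMulLog]
      ring
  simp_rw [toReal_klDiv_eq_sum (absolutelyContinuous_uniformOn_univ μ), hterm,
    Finset.sum_sub_distrib, ← Finset.sum_mul, sum_measureReal_singleton, Finset.coe_univ,
    probReal_univ, one_mul, shannonEntropy]

lemma exists_isProbabilityMeasure_measureReal_singleton_eq {P : Ω → ℝ}
    (hP : P ∈ stdSimplex ℝ Ω) :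
    ∃ μ : Measure Ω, IsProbabilityMeasure μ ∧ ∀ ω, μ.real {ω} = P ω := by
  have hsum : ∑ ω, ENNReal.ofReal (P ω) = 1 := by
    rw [← ENNReal.ofReal_sum_of_nonneg fun ω _ => hP.1 ω, hP.2, ENNReal.ofReal_one]
  refine ⟨(PMF.ofFintype _ hsum).toMeasure, inferInstance, fun ω => ?_⟩
  rw [measureReal_def, PMF.toMeasure_apply_singleton _ _ (measurableSet_singleton ω),
    PMF.ofFintype_apply, ENNReal.toReal_ofReal (hP.1 ω)]

end Uniform

section EntropyBound

variable {Ω : Type*} [Fintype Ω] {P : Ω → ℝ}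

lemma two_mul_sq_sum_sub_le_log_card_sub_shannonEntropy (hP : P ∈ stdSimplex ℝ Ω) (t : Finset Ω) :
    2 * (∑ ω ∈ t, P ω - (t.card : ℝ) / Fintype.card Ω) ^ 2 ≤
      Real.log (Fintype.card Ω) - shannonEntropy P := by
  let _ : MeasurableSpace Ω := ⊤
  obtain ⟨μ, _, hμ⟩ := exists_isProbabilityMeasure_measureReal_singleton_eq hP
  have : Nonempty Ω := nonempty_of_isProbabilityMeasure μ
  have : IsProbabilityMeasure (uniformOn (Set.univ : Set Ω)) :=
    isProbabilityMeasure_uniformOn Set.finite_univ Set.univ_nonempty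
  have hKL : klDiv μ (uniformOn Set.univ) ≠ ⊤ :=
    klDiv_ne_top (absolutelyContinuous_uniformOn_univ μ) .of_finite
  have hpinsker := two_mul_sq_measureReal_sub_le_toReal_klDiv t.measurableSet hKL
  rwa [toReal_klDiv_uniformOn_univ, measureReal_uniformOn_univ, ← sum_measureReal_singleton,
    funext hμ] at hpinsker

lemma shannonEntropy_div_log_two_le (hP : P ∈ stdSimplex ℝ Ω) (t : Finset Ω) :
    shannonEntropy P / Real.log 2 ≤ Real.logb 2 (Fintype.card Ω) -
      2 * (∑ ω ∈ t, P ω - (t.card : ℝ) / Fintype.card Ω) ^ 2 := by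
  have hnats := two_mul_sq_sum_sub_le_log_card_sub_shannonEntropy hP t
  have hnonneg : 0 ≤ Real.log (Fintype.card Ω) - shannonEntropy P :=
    (by positivity : (0 : ℝ) ≤ _).trans hnats
  have hlog : Real.log 2 ≤ 1 := Real.log_two_lt_d9.le.trans (by norm_num)
  have hbits := hnats.trans (le_div_self hnonneg (Real.log_pos one_lt_two) hlog)
  rw [sub_div, Real.log_div_log] at hbits
  linarith

end EntropyBound

/-- **Expected-expressivity bound on bias.**
`bias(D,t) ≤ √((1/2)(log₂|Ω| - E_{F∼D}[H(P̄_F)])) = √(E_{F∼D}[(1/2)·D_KL(P̄_F ∥ U)])`,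
where `D_KL(P ∥ U) = log₂|Ω| - H(P)`.  In particular,
`E_{F∼D}[H(P̄_F)] ≤ H(E_{F∼D}[P̄_F]) ≤ log₂|Ω| - 2·bias(D,t)²`. -/
theorem expected_entropic_expressivity_bound_on_bias
    {Ω F : Type*} [Fintype Ω] [MeasurableSpace F]
    (Pbar : F → Ω → ℝ)
    (hP0 : ∀ f ω, 0 ≤ Pbar f ω)
    (hP1 : ∀ f, ∑ ω, Pbar f ω = 1)
    (D : Measure F) [IsProbabilityMeasure D]
    (hint : ∀ ω, Integrable (fun f => Pbar f ω) D)
    (hintH : Integrable (fun f => -∑ ω, Pbar f ω * Real.logb 2 (Pbar f ω)) D)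
    (t : Finset Ω) (k : ℕ) (hk : t.card = k)
    (p : ℝ) (hp : p = (k : ℝ) / (Fintype.card Ω))
    (bias : ℝ) (hbias : bias = (∫ f, (∑ ω ∈ t, Pbar f ω) ∂D) - p)
    (PbarD : Ω → ℝ) (hPbarD : ∀ ω, PbarD ω = ∫ f, Pbar f ω ∂D)
    (EH : ℝ) (hEH : EH = ∫ f, (-∑ ω, Pbar f ω * Real.logb 2 (Pbar f ω)) ∂D) :
    bias ≤ Real.sqrt ((1 / 2) * (Real.logb 2 (Fintype.card Ω) - EH))
    ∧ Real.sqrt ((1 / 2) * (Real.logb 2 (Fintype.card Ω) - EH))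
        = Real.sqrt (∫ f, (1 / 2) * (Real.logb 2 (Fintype.card Ω)
            - (-∑ ω, Pbar f ω * Real.logb 2 (Pbar f ω))) ∂D)
    ∧ EH ≤ -∑ ω, PbarD ω * Real.logb 2 (PbarD ω)
    ∧ -∑ ω, PbarD ω * Real.logb 2 (PbarD ω)
        ≤ Real.logb 2 (Fintype.card Ω) - 2 * bias ^ 2 := by
  have hP : Integrable Pbar D := .of_eval hint
  have hmean_eq : PbarD = ∫ f, Pbar f ∂D := funext fun ω => by rw [hPbarD, eval_integral hint]
  have hmean : PbarD ∈ stdSimplex ℝ Ω := hmean_eq ▸ (convex_stdSimplex ℝ Ω).integral_mem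
    (isClosed_stdSimplex ℝ Ω) (.of_forall fun f => ⟨hP0 f, hP1 f⟩) hP
  have hbias_eq : bias = ∑ ω ∈ t, PbarD ω - (t.card : ℝ) / Fintype.card Ω := by
    simp only [hbias, hp, hk, hPbarD, integral_finsetSum t fun ω _ => hint ω]
  have hdiv_eq : (1 / 2) * (Real.logb 2 (Fintype.card Ω) - EH) = ∫ f, (1 / 2) *
      (Real.logb 2 (Fintype.card Ω) - (-∑ ω, Pbar f ω * Real.logb 2 (Pbar f ω))) ∂D := by
    rw [integral_const_mul, integral_sub (integrable_const _) hintH, ← hEH, integral_const,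
      probReal_univ, one_smul]
  simp only [neg_sum_mul_logb] at hintH hEH hdiv_eq ⊢
  have hupper := hbias_eq ▸ shannonEntropy_div_log_two_le hmean t
  have hH : Integrable (fun f => shannonEntropy (Pbar f)) D := by
    simpa [(Real.log_pos one_lt_two).ne'] using hintH.mul_const (Real.log 2)
  have hjensen : EH ≤ shannonEntropy PbarD / Real.log 2 := by
    rw [hEH, integral_div, hmean_eq]
    gcongr
    exact integral_shannonEntropy_le (.of_forall hP0) hP hH
  exact ⟨Real.le_sqrt_of_sq_le (by linarith), congrArg _ hdiv_eq, hjensen, hupper⟩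
end
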